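/- arXiv:2208.10753 — 2 statements merged into one kernel-verified Lean document; each statement's English description precedes it below -/
import Mathlib

section
/- Let n be a positive integer, and for each i = 1,...,n let α_i, β_i, σ_i be real numbers with 0 < α_i < β_i ≤ 1 and σ_i² = α_i·β_i. Then for every z ∈ ℝⁿ, −(1/2)·Σ_{i=1}^n z_i²/σ_i² − (n/2)·log(2π) ≤ log ∏_{i=1}^n ∫_{α_i}^{β_i} (1/(β_i − α_i)) · (1/(√(2π)·σ)) · exp(−z_i²/(2σ²)) dσ. (This is the content of Theorem 1: the Neural-PCA objective with fixed variances σ_i is a lower bound of the log-likelihood of the hierarchical Bayesian model in which each standard deviation is uniformly distributed on [α_i, β_i]; the log-Jacobian-determinant term appears identically on both sides and cancels.) -/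
open Real MeasureTheory

/-! The mixture likelihood is an average of Gaussian densities over the standard deviation `s`, so
by Jensen's inequality its logarithm is at least the average of their logarithms. Up to a constant
the log-density is `-log s - z² / (2s²)`: the average of `1 / s²` over `[α, β]` is `1 / (αβ)`, which
is where `σ² = αβ` comes from, and the average of `log s` is nonpositive as soon as `β ≤ 1`. -/

open scoped Interval

theorem average_log_le_log_average {Ω : Type*} [MeasurableSpace Ω] {μ : Measure Ω}
    [IsFiniteMeasure μ] [NeZero μ] {f : Ω → ℝ} (hpos : ∀ᵐ x ∂μ, 0 < f x) (hf : Integrable f μ)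
    (hlog : Integrable (fun x ↦ log (f x)) μ) :
    ⨍ x, log (f x) ∂μ ≤ log (⨍ x, f x ∂μ) := by
  have hexp : (fun x ↦ exp (log (f x))) =ᵐ[μ] f := hpos.mono fun x hx ↦ exp_log hx
  have hJensen : exp (⨍ x, log (f x) ∂μ) ≤ ⨍ x, f x ∂μ := by
    rw [← average_congr hexp]
    exact convexOn_exp.map_average_le continuous_exp.continuousOn isClosed_univ
      (ae_of_all _ fun _ ↦ Set.mem_univ _) hlog (hf.congr hexp.symm)
  exact (le_log_iff_exp_le ((exp_pos _).trans_le hJensen)).2 hJensen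

theorem intervalAverage_log_le_log_intervalAverage {a b : ℝ} (hab : a ≠ b) {f : ℝ → ℝ}
    (hf : ContinuousOn f [[a, b]]) (hpos : ∀ s ∈ [[a, b]], 0 < f s) :
    ⨍ s in a..b, log (f s) ≤ log (⨍ s in a..b, f s) := by
  have : NeZero (volume (Ι a b)) := ⟨by simpa [sub_eq_zero] using hab.symm⟩
  have : IsFiniteMeasure (volume.restrict (Ι a b)) := isFiniteMeasure_restrict.2 (by simp)
  have hlog : ContinuousOn (fun s ↦ log (f s)) [[a, b]] := hf.log fun s hs ↦ (hpos s hs).ne'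
  exact average_log_le_log_average
    (ae_restrict_of_forall_mem measurableSet_uIoc fun s hs ↦ hpos s (Set.uIoc_subset_uIcc hs))
    hf.intervalIntegrable.def' hlog.intervalIntegrable.def'

theorem intervalAverage_inv_sq {a b : ℝ} (hab : a ≠ b) (h0 : (0 : ℝ) ∉ [[a, b]]) :
    ⨍ s in a..b, (s ^ 2)⁻¹ = (a * b)⁻¹ := by
  have ha : a ≠ 0 := fun h ↦ h0 (h ▸ Set.left_mem_uIcc)
  have hb : b ≠ 0 := fun h ↦ h0 (h ▸ Set.right_mem_uIcc)
  have hba : b - a ≠ 0 := sub_ne_zero.2 hab.symm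
  have hint : ∫ s in a..b, (s ^ 2)⁻¹ = a⁻¹ - b⁻¹ :=
    calc ∫ s in a..b, (s ^ 2)⁻¹ = ∫ s in a..b, s ^ (-2 : ℤ) := by simp only [zpow_neg]; norm_cast
      _ = a⁻¹ - b⁻¹ := by rw [integral_zpow (.inr ⟨by norm_num, h0⟩)]; norm_num [div_neg]
  rw [interval_average_eq, hint, smul_eq_mul]
  field_simp

theorem intervalAverage_log_nonpos {a b : ℝ} (ha : 0 ≤ a) (hab : a ≤ b) (hb : b ≤ 1) :
    ⨍ s in a..b, log s ≤ 0 := by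
  rw [Set.uIoc_of_le hab, setAverage_eq]
  exact smul_nonpos_of_nonneg_of_nonpos (inv_nonneg.2 measureReal_nonneg) <|
    setIntegral_nonpos measurableSet_Ioc fun s hs ↦
      log_nonpos (ha.trans hs.1.le) (hs.2.trans hb)

/-- The density at `z` of the centred Gaussian distribution on `ℝ`, parametrized by its standard
deviation `s > 0`, over which the hierarchical model averages. Mathlib's
`ProbabilityTheory.gaussianPDFReal` is parametrized by the variance, as a nonnegative real. -/
noncomputable def gaussianDensity (s z : ℝ) : ℝ :=
  1 / (√(2 * π) * s) * exp (-z ^ 2 / (2 * s ^ 2))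

namespace gaussianDensity

theorem pos {s : ℝ} (hs : 0 < s) (z : ℝ) : 0 < gaussianDensity s z := by
  unfold gaussianDensity
  positivity

theorem log_eq {s : ℝ} (hs : s ≠ 0) (z : ℝ) :
    log (gaussianDensity s z) = -(log (2 * π) / 2) - log s - z ^ 2 / 2 * (s ^ 2)⁻¹ := by
  have hπ : √(2 * π) ≠ 0 := by positivity
  rw [gaussianDensity, log_mul (by positivity) (exp_ne_zero _), log_exp, one_div, log_inv,
    log_mul hπ hs, log_sqrt (by positivity)]
  ring

theorem continuousOn (z : ℝ) : ContinuousOn (gaussianDensity · z) {0}ᶜ := by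
  intro s (hs : s ≠ 0)
  have hcoeff : √(2 * π) * s ≠ 0 := by positivity
  have hvar : 2 * s ^ 2 ≠ 0 := by positivity
  unfold gaussianDensity
  exact ContinuousAt.continuousWithinAt (by fun_prop (disch := assumption))

theorem intervalAverage_eq_integral (a b z : ℝ) :
    ⨍ s in a..b, gaussianDensity s z = ∫ s in a..b,
      (1 / (b - a)) * (1 / (√(2 * π) * s)) * exp (-z ^ 2 / (2 * s ^ 2)) := by
  simp only [interval_average_eq, smul_eq_mul, gaussianDensity, mul_assoc,
    intervalIntegral.integral_const_mul, one_div (b - a)]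

variable {a b : ℝ}

theorem intervalAverage_log (hab : a ≠ b) (h0 : (0 : ℝ) ∉ [[a, b]]) (z : ℝ) :
    ⨍ s in a..b, log (gaussianDensity s z) =
      -(log (2 * π) / 2) - (⨍ s in a..b, log s) - z ^ 2 / (2 * (a * b)) := by
  have hne : ∀ s ∈ [[a, b]], s ≠ 0 := fun s hs h ↦ h0 (h ▸ hs)
  have hba : b - a ≠ 0 := sub_ne_zero.2 hab.symm
  have hinv : IntervalIntegrable (fun s : ℝ ↦ z ^ 2 / 2 * (s ^ 2)⁻¹) volume a b :=
    (continuousOn_const.mul ((continuousOn_id.pow 2).inv₀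
      fun s hs ↦ pow_ne_zero 2 (hne s hs))).intervalIntegrable
  have hintegral : ∫ s in a..b, log (gaussianDensity s z) =
      (b - a) * -(log (2 * π) / 2) - (∫ s in a..b, log s) - z ^ 2 / 2 * ∫ s in a..b, (s ^ 2)⁻¹ := by
    rw [intervalIntegral.integral_congr fun s hs ↦ log_eq (hne s hs) z,
      intervalIntegral.integral_sub
        (intervalIntegrable_const.sub intervalIntegral.intervalIntegrable_log') hinv,
      intervalIntegral.integral_sub intervalIntegrable_const
        intervalIntegral.intervalIntegrable_log',
      intervalIntegral.integral_const, intervalIntegral.integral_const_mul, smul_eq_mul]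
  calc ⨍ s in a..b, log (gaussianDensity s z)
      = -(log (2 * π) / 2) - (⨍ s in a..b, log s) - z ^ 2 / 2 * ⨍ s in a..b, (s ^ 2)⁻¹ := by
        simp only [interval_average_eq, smul_eq_mul, hintegral]
        field_simp
    _ = _ := by
        rw [intervalAverage_inv_sq hab h0]
        ring

theorem intervalAverage_pos (ha : 0 < a) (hb : 0 < b) (hab : a ≠ b) (z : ℝ) :
    0 < ⨍ s in a..b, gaussianDensity s z := by
  have hpos : ∀ s ∈ [[a, b]], 0 < s := fun s hs ↦ (lt_min ha hb).trans_le hs.1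
  obtain ⟨c, hc, hmean⟩ := exists_eq_interval_average hab
    ((continuousOn z).mono fun s hs ↦ (hpos s hs).ne')
  rw [← hmean]
  exact pos (hpos c (Set.uIoo_subset_uIcc_self hc)) z

theorem le_log_intervalAverage (ha : 0 < a) (hb : 0 < b) (hab : a ≠ b) (z : ℝ) :
    -(log (2 * π) / 2) - (⨍ s in a..b, log s) - z ^ 2 / (2 * (a * b)) ≤
      log (⨍ s in a..b, gaussianDensity s z) := by
  have hpos : ∀ s ∈ [[a, b]], 0 < s := fun s hs ↦ (lt_min ha hb).trans_le hs.1
  rw [← intervalAverage_log hab fun h ↦ (hpos 0 h).false]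
  exact intervalAverage_log_le_log_intervalAverage hab
    ((continuousOn z).mono fun s hs ↦ (hpos s hs).ne') fun s hs ↦ pos (hpos s hs) z

end gaussianDensity

theorem neural_pca_lower_bound_general {ι : Type*} [Fintype ι] (α β σ : ι → ℝ)
    (hαβ : ∀ i, 0 < α i ∧ α i < β i) (hσ : ∀ i, (σ i) ^ 2 = α i * β i) (z : ι → ℝ) :
    -(1 / 2) * (∑ i, (z i) ^ 2 / (σ i) ^ 2) - (Fintype.card ι / 2 : ℝ) * log (2 * π) -
        ∑ i, ⨍ s in (α i)..(β i), log s ≤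
      log (∏ i, ∫ s in (α i)..(β i),
        (1 / (β i - α i)) * (1 / (√(2 * π) * s)) * exp (-(z i) ^ 2 / (2 * s ^ 2))) := by
  have hβ : ∀ i, 0 < β i := fun i ↦ (hαβ i).1.trans (hαβ i).2
  simp only [← gaussianDensity.intervalAverage_eq_integral]
  rw [log_prod fun i _ ↦
    (gaussianDensity.intervalAverage_pos (hαβ i).1 (hβ i) (hαβ i).2.ne (z i)).ne']
  calc _ = ∑ i, (-(log (2 * π) / 2) - (⨍ s in (α i)..(β i), log s) -
        (z i) ^ 2 / (2 * (α i * β i))) := by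
        simp only [hσ, Finset.sum_sub_distrib, Finset.sum_const, Finset.card_univ, nsmul_eq_mul,
          mul_comm (2 : ℝ) (α _ * β _), ← div_div, ← Finset.sum_div]
        ring
    _ ≤ _ := Finset.sum_le_sum fun i _ ↦
        gaussianDensity.le_log_intervalAverage (hαβ i).1 (hβ i) (hαβ i).2.ne (z i)

/-- **Theorem 1 (paper), core inequality.** For each dimension `i` with
`0 < α i < β i ≤ 1` and `(σ i)^2 = α i * β i`, the fixed-variance Gaussian
log-likelihood `-(1/2) ∑ z_i²/σ_i² - (n/2) log(2π)` is a lower bound of the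
log marginal likelihood of the hierarchical Bayesian model in which the
standard deviation of dimension `i` is uniform on `[α i, β i]`. -/
theorem neural_pca_lower_bound (n : ℕ) (hn : 0 < n)
    (α β σ : Fin n → ℝ)
    (hαβ : ∀ i, 0 < α i ∧ α i < β i ∧ β i ≤ 1)
    (hσ : ∀ i, (σ i) ^ 2 = α i * β i)
    (z : Fin n → ℝ) :
    -(1 / 2) * (∑ i, (z i) ^ 2 / (σ i) ^ 2) - (n / 2 : ℝ) * Real.log (2 * π) ≤
      Real.log (∏ i, ∫ s in (α i)..(β i),
        (1 / (β i - α i)) * (1 / (Real.sqrt (2 * π) * s)) *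
          Real.exp (-(z i) ^ 2 / (2 * s ^ 2))) := by
  have hlog : ∑ i, ⨍ s in (α i)..(β i), log s ≤ 0 := Finset.sum_nonpos fun i _ ↦
    intervalAverage_log_nonpos (hαβ i).1.le (hαβ i).2.1.le (hαβ i).2.2
  have hgeneral := neural_pca_lower_bound_general α β σ (fun i ↦ ⟨(hαβ i).1, (hαβ i).2.1⟩) hσ z
  rw [Fintype.card_fin] at hgeneral
  exact ((le_sub_self_iff _).2 hlog).trans hgeneral
end

section
/- Let α, β, z be real numbers with 0 < α < β. Then −z²/(2αβ) + 1 − (β·log β − α·log α)/(β − α) − log √(2π) = (1/(β − α)) · ∫_α^β ( −z²/(2σ²) − log(√(2π)·σ) ) dσ. -/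
open Real MeasureTheory

section LogGaussianIntegrals

open intervalIntegral
open scoped Interval

theorem integral_inv_sq {a b : ℝ} (h : (0 : ℝ) ∉ [[a, b]]) :
    ∫ x in a..b, (x ^ 2)⁻¹ = a⁻¹ - b⁻¹ :=
  calc ∫ x in a..b, (x ^ 2)⁻¹
    _ = ∫ x in a..b, x ^ (-2 : ℤ) := by simp only [zpow_neg, zpow_ofNat]
    _ = (b ^ (-2 + 1 : ℤ) - a ^ (-2 + 1 : ℤ)) / ((-2 : ℤ) + 1) :=
      integral_zpow (Or.inr ⟨by norm_num, h⟩)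
    _ = a⁻¹ - b⁻¹ := by norm_num [div_neg]

theorem intervalIntegrable_inv_sq {μ : Measure ℝ} [IsLocallyFiniteMeasure μ] {a b : ℝ}
    (h : (0 : ℝ) ∉ [[a, b]]) : IntervalIntegrable (fun x : ℝ => (x ^ 2)⁻¹) μ a b :=
  intervalIntegrable_inv (fun _ hx => pow_ne_zero 2 (ne_of_mem_of_not_mem hx h)) (by fun_prop)

theorem log_const_mul_ae_eq_add {μ : Measure ℝ} [NullSingletonClass μ] {c : ℝ} (hc : c ≠ 0) :
    (fun x => log (c * x)) =ᵐ[μ] fun x => log c + log x := by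
  filter_upwards [Measure.ae_ne μ 0] with x hx using log_mul hc hx

theorem intervalIntegrable_log_const_mul (a b c : ℝ) :
    IntervalIntegrable (fun x => log (c * x)) volume a b := by
  rcases eq_or_ne c 0 with rfl | hc
  · simp
  · exact (intervalIntegrable_const.add intervalIntegrable_log').congr_ae
      (ae_restrict_of_ae (log_const_mul_ae_eq_add hc).symm)

theorem integral_log_const_mul {c : ℝ} (hc : c ≠ 0) (a b : ℝ) :
    ∫ x in a..b, log (c * x) = (b - a) * log c + (b * log b - a * log a - b + a) := by
  rw [integral_congr_ae_restrict (ae_restrict_of_ae (log_const_mul_ae_eq_add hc)),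
    integral_add intervalIntegrable_const intervalIntegrable_log',
    intervalIntegral.integral_const, integral_log, smul_eq_mul]

theorem integral_log_gaussian_density {a b : ℝ} (h : (0 : ℝ) ∉ [[a, b]]) (z : ℝ) :
    ∫ σ in a..b, (-z ^ 2 / (2 * σ ^ 2) - log (√(2 * π) * σ)) =
      -z ^ 2 / 2 * (a⁻¹ - b⁻¹)
        - ((b - a) * log √(2 * π) + (b * log b - a * log a - b + a)) := by
  have hsqrt : √(2 * π) ≠ 0 := by positivity
  have hquad (σ : ℝ) : -z ^ 2 / (2 * σ ^ 2) = -z ^ 2 / 2 * (σ ^ 2)⁻¹ := by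
    rw [← div_div, div_eq_mul_inv _ (σ ^ 2)]
  simp only [hquad]
  rw [integral_sub ((intervalIntegrable_inv_sq h).const_mul _)
      (intervalIntegrable_log_const_mul a b _),
    intervalIntegral.integral_const_mul, integral_inv_sq h, integral_log_const_mul hsqrt]

end LogGaussianIntegrals

/-- Per-dimension exact identity (steps A.1–A.11 in the proof of Theorem 1):
the expectation of the log-density of a centered Gaussian `N(0, σ²)` at `z`,
over `σ` uniform on `[α, β]`, equals the closed-form left-hand side. -/
theorem expected_log_gaussian_density (α β z : ℝ) (hα : 0 < α) (hαβ : α < β) :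
    -z ^ 2 / (2 * α * β) + 1 - (β * Real.log β - α * Real.log α) / (β - α)
        - Real.log (Real.sqrt (2 * π)) =
      (1 / (β - α)) *
        ∫ σ in α..β, (-z ^ 2 / (2 * σ ^ 2) - Real.log (Real.sqrt (2 * π) * σ)) := by
  have hβ : 0 < β := hα.trans hαβ
  have hlen : β - α ≠ 0 := (sub_pos.2 hαβ).ne'
  rw [integral_log_gaussian_density (Set.notMem_uIcc_of_lt hα hβ)]
  field_simp
  ring
end
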